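/- arXiv:1801.10298 — 2 statements merged into one kernel-verified Lean document; each statement's English description precedes it below -/
import Mathlib

section
/- Each of the endomorphisms H, X⁺, X⁻ of R commutes with every operator in the image of the 𝔬(p,q)-representation π; concretely, for all 1 ≤ i,j ≤ p the operator −x_j∂_{x_i} + x_i∂_{x_j} commutes with H, X⁺ and X⁻; for all 1 ≤ i,j ≤ q the operator −y_j∂_{y_i} + y_i∂_{y_j} commutes with H, X⁺ and X⁻; and for all 1 ≤ i ≤ p, 1 ≤ j ≤ q the operator i·(x_i y_j + ∂_{x_i}∂_{y_j}) (i the imaginary unit) commutes with H, X⁺ and X⁻. -/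
noncomputable section

/-- The polynomial ring `ℂ[x₁,…,x_p, y₁,…,y_q]`. -/
abbrev Rpq (p q : ℕ) := MvPolynomial (Fin p ⊕ Fin q) ℂ

/-- Multiplication by `x_i`. -/
def xop (p q : ℕ) (i : Fin p) : Module.End ℂ (Rpq p q) :=
  LinearMap.mulLeft ℂ (MvPolynomial.X (Sum.inl i))

/-- Multiplication by `y_j`. -/
def yop (p q : ℕ) (j : Fin q) : Module.End ℂ (Rpq p q) :=
  LinearMap.mulLeft ℂ (MvPolynomial.X (Sum.inr j))

/-- The partial derivative `∂_{x_i}`. -/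
def dx (p q : ℕ) (i : Fin p) : Module.End ℂ (Rpq p q) :=
  (MvPolynomial.pderiv (Sum.inl i)).toLinearMap

/-- The partial derivative `∂_{y_j}`. -/
def dy (p q : ℕ) (j : Fin q) : Module.End ℂ (Rpq p q) :=
  (MvPolynomial.pderiv (Sum.inr j)).toLinearMap

/-- The Euler operator `E_x = Σ_i x_i ∂_{x_i}`. -/
def Eop_x (p q : ℕ) : Module.End ℂ (Rpq p q) := ∑ i : Fin p, xop p q i * dx p q i

/-- The Euler operator `E_y = Σ_j y_j ∂_{y_j}`. -/
def Eop_y (p q : ℕ) : Module.End ℂ (Rpq p q) := ∑ j : Fin q, yop p q j * dy p q j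

/-- Multiplication by `r_x² = Σ_i x_i²`. -/
def rx2 (p q : ℕ) : Module.End ℂ (Rpq p q) :=
  LinearMap.mulLeft ℂ (∑ i : Fin p, MvPolynomial.X (Sum.inl i) ^ 2)

/-- Multiplication by `r_y² = Σ_j y_j²`. -/
def ry2 (p q : ℕ) : Module.End ℂ (Rpq p q) :=
  LinearMap.mulLeft ℂ (∑ j : Fin q, MvPolynomial.X (Sum.inr j) ^ 2)

/-- The Laplacian `Δ_x = Σ_i ∂_{x_i}²`. -/
def Δx (p q : ℕ) : Module.End ℂ (Rpq p q) := ∑ i : Fin p, dx p q i * dx p q i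

/-- The Laplacian `Δ_y = Σ_j ∂_{y_j}²`. -/
def Δy (p q : ℕ) : Module.End ℂ (Rpq p q) := ∑ j : Fin q, dy p q j * dy p q j

/-- `H = −E_x − (p/2)·id + E_y + (q/2)·id`. -/
def Hop (p q : ℕ) : Module.End ℂ (Rpq p q) :=
  -Eop_x p q - ((p : ℂ) / 2) • 1 + Eop_y p q + ((q : ℂ) / 2) • 1

/-- `X⁺ = −(1/2)(Δ_x + r_y²)`. -/
def Xplus (p q : ℕ) : Module.End ℂ (Rpq p q) :=
  -((1 : ℂ) / 2) • (Δx p q + ry2 p q)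

/-- `X⁻ = (1/2)(r_x² + Δ_y)`. -/
def Xminus (p q : ℕ) : Module.End ℂ (Rpq p q) :=
  ((1 : ℂ) / 2) • (rx2 p q + Δy p q)

/-- The matrix `I_{p,q} = diag(1_p, −1_q)` over `ℂ`. -/
def IpqC (p q : ℕ) : Matrix (Fin (p + q)) (Fin (p + q)) ℂ :=
  Matrix.diagonal (fun i => if (i : ℕ) < p then 1 else -1)

end

set_option linter.unusedSimpArgs false
set_option linter.unusedVariables false

section Weyl
variable {A ι : Type*} [Ring A] [Fintype ι]

def cm (a b : A) : A := a * b - b * a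

theorem w_lie_mul (Q a b : A) : cm (Q) (a * b) = cm (Q) (a) * b + a * cm (Q) (b) := by
  simp only [cm]; noncomm_ring

theorem w_mul_lie (a b Q : A) : cm (a * b) (Q) = cm (a) (Q) * b + a * cm (b) (Q) := by
  simp only [cm]; noncomm_ring

theorem w_sum_lie (f : ι → A) (Q : A) : cm (∑ k, f k) Q = ∑ k, cm (f k) Q := by
  simp only [cm, Finset.sum_mul, Finset.mul_sum, Finset.sum_sub_distrib]

theorem w_one_lie (Q : A) : cm ((1 : A)) (Q) = 0 := by
  simp [cm]

theorem w_skew (a b : A) : -cm a b = cm b a := by simp [cm]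

theorem w_commute (a b : A) : cm a b = 0 ↔ Commute a b := by
  simp [cm, sub_eq_zero, Commute, SemiconjBy]

theorem w_add_cm (a b c : A) : cm (a + b) c = cm a c + cm b c := by
  simp only [cm]; noncomm_ring

theorem w_sub_cm (a b c : A) : cm (a - b) c = cm a c - cm b c := by
  simp only [cm]; noncomm_ring

theorem w_neg_cm (a c : A) : cm (-a) c = -cm a c := by
  simp only [cm]; noncomm_ring

theorem w_cm_add (a b c : A) : cm c (a + b) = cm c a + cm c b := by
  simp only [cm]; noncomm_ring

theorem w_cm_neg (a c : A) : cm c (-a) = -cm c a := by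
  simp only [cm]; noncomm_ring

theorem w_smul_cm [Algebra ℂ A] (z : ℂ) (a c : A) : cm (z • a) c = z • cm a c := by
  simp [cm, smul_sub]

theorem w_cm_smul [Algebra ℂ A] (z : ℂ) (a c : A) : cm c (z • a) = z • cm c a := by
  simp [cm, smul_sub]

end Weyl

section Rel
variable (p q : ℕ)

noncomputable abbrev mop (s : Fin p ⊕ Fin q) : Module.End ℂ (Rpq p q) := LinearMap.mulLeft ℂ (MvPolynomial.X s)
noncomputable abbrev dop (s : Fin p ⊕ Fin q) : Module.End ℂ (Rpq p q) := (MvPolynomial.pderiv s).toLinearMap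

theorem r_mm (s t : Fin p ⊕ Fin q) : cm (mop p q s) (mop p q t) = 0 := by
  refine LinearMap.ext fun f => ?_
  simp [cm]; ring

theorem r_dm (s t : Fin p ⊕ Fin q) : cm (dop p q s) (mop p q t) = if s = t then 1 else 0 := by
  refine LinearMap.ext fun f => ?_
  by_cases h : s = t
  · subst h; simp [cm]
  · simp [cm, h, MvPolynomial.pderiv_X_of_ne (Ne.symm h)]

theorem r_md (s t : Fin p ⊕ Fin q) : cm (mop p q s) (dop p q t) = if t = s then -1 else 0 := by
  rw [← w_skew, r_dm]; split_ifs <;> simp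

theorem r_dd (s t : Fin p ⊕ Fin q) : cm (dop p q s) (dop p q t) = 0 := by
  have : ⁅(MvPolynomial.pderiv s : Derivation ℂ (Rpq p q) (Rpq p q)), (MvPolynomial.pderiv t : Derivation ℂ (Rpq p q) (Rpq p q))⁆ = 0 := by
    apply MvPolynomial.derivation_ext
    intro i
    classical
    simp [Derivation.commutator_apply, MvPolynomial.pderiv_X, Pi.single_apply, apply_ite]
  refine LinearMap.ext fun f => ?_
  have h := congrArg (fun D => D f) this
  simpa [Derivation.commutator_apply, cm] using h

theorem g_xx (i : Fin p) (j : Fin p) : cm (xop p q i) (xop p q j) = 0 := by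
  simpa [xop, xop] using r_mm p q (Sum.inl i) (Sum.inl j)

theorem g_xy (i : Fin p) (j : Fin q) : cm (xop p q i) (yop p q j) = 0 := by
  simpa [xop, yop] using r_mm p q (Sum.inl i) (Sum.inr j)

theorem g_xd (i : Fin p) (j : Fin p) : cm (xop p q i) (dx p q j) = if j = i then -1 else 0 := by
  simpa [xop, dx] using r_md p q (Sum.inl i) (Sum.inl j)

theorem g_xe (i : Fin p) (j : Fin q) : cm (xop p q i) (dy p q j) = 0 := by
  simpa [xop, dy] using r_md p q (Sum.inl i) (Sum.inr j)

theorem g_yx (i : Fin q) (j : Fin p) : cm (yop p q i) (xop p q j) = 0 := by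
  simpa [yop, xop] using r_mm p q (Sum.inr i) (Sum.inl j)

theorem g_yy (i : Fin q) (j : Fin q) : cm (yop p q i) (yop p q j) = 0 := by
  simpa [yop, yop] using r_mm p q (Sum.inr i) (Sum.inr j)

theorem g_yd (i : Fin q) (j : Fin p) : cm (yop p q i) (dx p q j) = 0 := by
  simpa [yop, dx] using r_md p q (Sum.inr i) (Sum.inl j)

theorem g_ye (i : Fin q) (j : Fin q) : cm (yop p q i) (dy p q j) = if j = i then -1 else 0 := by
  simpa [yop, dy] using r_md p q (Sum.inr i) (Sum.inr j)

theorem g_dx (i : Fin p) (j : Fin p) : cm (dx p q i) (xop p q j) = if i = j then 1 else 0 := by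
  simpa [dx, xop] using r_dm p q (Sum.inl i) (Sum.inl j)

theorem g_dy (i : Fin p) (j : Fin q) : cm (dx p q i) (yop p q j) = 0 := by
  simpa [dx, yop] using r_dm p q (Sum.inl i) (Sum.inr j)

theorem g_dd (i : Fin p) (j : Fin p) : cm (dx p q i) (dx p q j) = 0 := by
  simpa [dx, dx] using r_dd p q (Sum.inl i) (Sum.inl j)

theorem g_de (i : Fin p) (j : Fin q) : cm (dx p q i) (dy p q j) = 0 := by
  simpa [dx, dy] using r_dd p q (Sum.inl i) (Sum.inr j)

theorem g_ex (i : Fin q) (j : Fin p) : cm (dy p q i) (xop p q j) = 0 := by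
  simpa [dy, xop] using r_dm p q (Sum.inr i) (Sum.inl j)

theorem g_ey (i : Fin q) (j : Fin q) : cm (dy p q i) (yop p q j) = if i = j then 1 else 0 := by
  simpa [dy, yop] using r_dm p q (Sum.inr i) (Sum.inr j)

theorem g_ed (i : Fin q) (j : Fin p) : cm (dy p q i) (dx p q j) = 0 := by
  simpa [dy, dx] using r_dd p q (Sum.inr i) (Sum.inl j)

theorem g_ee (i : Fin q) (j : Fin q) : cm (dy p q i) (dy p q j) = 0 := by
  simpa [dy, dy] using r_dd p q (Sum.inr i) (Sum.inr j)

theorem rx2_eq : rx2 p q = ∑ i, xop p q i * xop p q i := by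
  refine LinearMap.ext fun f => ?_
  simp [rx2, xop, Finset.sum_mul, pow_two, mul_assoc]

theorem ry2_eq : ry2 p q = ∑ i, yop p q i * yop p q i := by
  refine LinearMap.ext fun f => ?_
  simp [ry2, yop, Finset.sum_mul, pow_two, mul_assoc]

theorem abs_main {A : Type*} [Ring A] [Algebra ℂ A] (x d : Fin p → A) (y e : Fin q → A)
    (g_xx : ∀ (i : Fin p) (j : Fin p), cm (x i) (x j) = 0)
    (g_xy : ∀ (i : Fin p) (j : Fin q), cm (x i) (y j) = 0)
    (g_xd : ∀ (i : Fin p) (j : Fin p), cm (x i) (d j) = if j = i then -1 else 0)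
    (g_xe : ∀ (i : Fin p) (j : Fin q), cm (x i) (e j) = 0)
    (g_yx : ∀ (i : Fin q) (j : Fin p), cm (y i) (x j) = 0)
    (g_yy : ∀ (i : Fin q) (j : Fin q), cm (y i) (y j) = 0)
    (g_yd : ∀ (i : Fin q) (j : Fin p), cm (y i) (d j) = 0)
    (g_ye : ∀ (i : Fin q) (j : Fin q), cm (y i) (e j) = if j = i then -1 else 0)
    (g_dx : ∀ (i : Fin p) (j : Fin p), cm (d i) (x j) = if i = j then 1 else 0)
    (g_dy : ∀ (i : Fin p) (j : Fin q), cm (d i) (y j) = 0)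
    (g_dd : ∀ (i : Fin p) (j : Fin p), cm (d i) (d j) = 0)
    (g_de : ∀ (i : Fin p) (j : Fin q), cm (d i) (e j) = 0)
    (g_ex : ∀ (i : Fin q) (j : Fin p), cm (e i) (x j) = 0)
    (g_ey : ∀ (i : Fin q) (j : Fin q), cm (e i) (y j) = if i = j then 1 else 0)
    (g_ed : ∀ (i : Fin q) (j : Fin p), cm (e i) (d j) = 0)
    (g_ee : ∀ (i : Fin q) (j : Fin q), cm (e i) (e j) = 0)
    (H P M : A) (hH : H = -(∑ i, x i * d i) - ((p : ℂ) / 2) • 1 + (∑ j, y j * e j) + ((q : ℂ) / 2) • 1)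
    (hP : P = -((1 : ℂ) / 2) • ((∑ i, d i * d i) + ∑ j, y j * y j))
    (hM : M = ((1 : ℂ) / 2) • ((∑ i, x i * x i) + ∑ j, e j * e j)) :
    (∀ i j : Fin p,
      Commute (-(x j * d i) + x i * d j) H ∧
      Commute (-(x j * d i) + x i * d j) P ∧
      Commute (-(x j * d i) + x i * d j) M) ∧
    (∀ i j : Fin q,
      Commute (-(y j * e i) + y i * e j) H ∧
      Commute (-(y j * e i) + y i * e j) P ∧
      Commute (-(y j * e i) + y i * e j) M) ∧
    (∀ (i : Fin p) (j : Fin q),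
      Commute (Complex.I • (x i * y j + d i * e j)) H ∧
      Commute (Complex.I • (x i * y j + d i * e j)) P ∧
      Commute (Complex.I • (x i * y j + d i * e j)) M) := by
  have f_H_x : ∀ i, cm H (x i) = -x i := by
    intro i
    simp [hH, w_sum_lie, w_mul_lie, w_one_lie, w_add_cm, w_sub_cm, w_neg_cm, w_smul_cm, g_xx, g_xy, g_xd, g_xe, g_yx, g_yy, g_yd, g_ye, g_dx, g_dy, g_dd, g_de, g_ex, g_ey, g_ed, g_ee, Finset.sum_add_distrib]
    try module
  have f_H_y : ∀ i, cm H (y i) = y i := by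
    intro i
    simp [hH, w_sum_lie, w_mul_lie, w_one_lie, w_add_cm, w_sub_cm, w_neg_cm, w_smul_cm, g_xx, g_xy, g_xd, g_xe, g_yx, g_yy, g_yd, g_ye, g_dx, g_dy, g_dd, g_de, g_ex, g_ey, g_ed, g_ee, Finset.sum_add_distrib]
    try module
  have f_H_d : ∀ i, cm H (d i) = d i := by
    intro i
    simp [hH, w_sum_lie, w_mul_lie, w_one_lie, w_add_cm, w_sub_cm, w_neg_cm, w_smul_cm, g_xx, g_xy, g_xd, g_xe, g_yx, g_yy, g_yd, g_ye, g_dx, g_dy, g_dd, g_de, g_ex, g_ey, g_ed, g_ee, Finset.sum_add_distrib]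
    try module
  have f_H_e : ∀ i, cm H (e i) = -e i := by
    intro i
    simp [hH, w_sum_lie, w_mul_lie, w_one_lie, w_add_cm, w_sub_cm, w_neg_cm, w_smul_cm, g_xx, g_xy, g_xd, g_xe, g_yx, g_yy, g_yd, g_ye, g_dx, g_dy, g_dd, g_de, g_ex, g_ey, g_ed, g_ee, Finset.sum_add_distrib]
    try module
  have f_P_x : ∀ i, cm P (x i) = -d i := by
    intro i
    simp [hP, w_sum_lie, w_mul_lie, w_one_lie, w_add_cm, w_sub_cm, w_neg_cm, w_smul_cm, g_xx, g_xy, g_xd, g_xe, g_yx, g_yy, g_yd, g_ye, g_dx, g_dy, g_dd, g_de, g_ex, g_ey, g_ed, g_ee, Finset.sum_add_distrib]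
    try module
  have f_P_y : ∀ i, cm P (y i) = 0 := by
    intro i
    simp [hP, w_sum_lie, w_mul_lie, w_one_lie, w_add_cm, w_sub_cm, w_neg_cm, w_smul_cm, g_xx, g_xy, g_xd, g_xe, g_yx, g_yy, g_yd, g_ye, g_dx, g_dy, g_dd, g_de, g_ex, g_ey, g_ed, g_ee, Finset.sum_add_distrib]
    try module
  have f_P_d : ∀ i, cm P (d i) = 0 := by
    intro i
    simp [hP, w_sum_lie, w_mul_lie, w_one_lie, w_add_cm, w_sub_cm, w_neg_cm, w_smul_cm, g_xx, g_xy, g_xd, g_xe, g_yx, g_yy, g_yd, g_ye, g_dx, g_dy, g_dd, g_de, g_ex, g_ey, g_ed, g_ee, Finset.sum_add_distrib]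
    try module
  have f_P_e : ∀ i, cm P (e i) = y i := by
    intro i
    simp [hP, w_sum_lie, w_mul_lie, w_one_lie, w_add_cm, w_sub_cm, w_neg_cm, w_smul_cm, g_xx, g_xy, g_xd, g_xe, g_yx, g_yy, g_yd, g_ye, g_dx, g_dy, g_dd, g_de, g_ex, g_ey, g_ed, g_ee, Finset.sum_add_distrib]
    try module
  have f_M_x : ∀ i, cm M (x i) = 0 := by
    intro i
    simp [hM, w_sum_lie, w_mul_lie, w_one_lie, w_add_cm, w_sub_cm, w_neg_cm, w_smul_cm, g_xx, g_xy, g_xd, g_xe, g_yx, g_yy, g_yd, g_ye, g_dx, g_dy, g_dd, g_de, g_ex, g_ey, g_ed, g_ee, Finset.sum_add_distrib]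
    try module
  have f_M_y : ∀ i, cm M (y i) = e i := by
    intro i
    simp [hM, w_sum_lie, w_mul_lie, w_one_lie, w_add_cm, w_sub_cm, w_neg_cm, w_smul_cm, g_xx, g_xy, g_xd, g_xe, g_yx, g_yy, g_yd, g_ye, g_dx, g_dy, g_dd, g_de, g_ex, g_ey, g_ed, g_ee, Finset.sum_add_distrib]
    try module
  have f_M_d : ∀ i, cm M (d i) = -x i := by
    intro i
    simp [hM, w_sum_lie, w_mul_lie, w_one_lie, w_add_cm, w_sub_cm, w_neg_cm, w_smul_cm, g_xx, g_xy, g_xd, g_xe, g_yx, g_yy, g_yd, g_ye, g_dx, g_dy, g_dd, g_de, g_ex, g_ey, g_ed, g_ee, Finset.sum_add_distrib]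
    try module
  have f_M_e : ∀ i, cm M (e i) = 0 := by
    intro i
    simp [hM, w_sum_lie, w_mul_lie, w_one_lie, w_add_cm, w_sub_cm, w_neg_cm, w_smul_cm, g_xx, g_xy, g_xd, g_xe, g_yx, g_yy, g_yd, g_ye, g_dx, g_dy, g_dd, g_de, g_ex, g_ey, g_ed, g_ee, Finset.sum_add_distrib]
    try module
  have gx : ∀ i j, x i * x j = x j * x i := fun i j => by
    have := g_xx i j
    rwa [cm, sub_eq_zero] at this
  have gy : ∀ i j, y i * y j = y j * y i := fun i j => by
    have := g_yy i j
    rwa [cm, sub_eq_zero] at this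
  have gd : ∀ i j, d i * d j = d j * d i := fun i j => by
    have := g_dd i j
    rwa [cm, sub_eq_zero] at this
  have ge : ∀ i j, e i * e j = e j * e i := fun i j => by
    have := g_ee i j
    rwa [cm, sub_eq_zero] at this
  have gxe : ∀ i j, x i * e j = e j * x i := fun i j => by
    have := g_xe i j
    rwa [cm, sub_eq_zero] at this
  have gdy : ∀ i j, d i * y j = y j * d i := fun i j => by
    have := g_dy i j
    rwa [cm, sub_eq_zero] at this
  clear hH hP hM
  refine ⟨fun i j => ⟨?_, ?_, ?_⟩, fun i j => ⟨?_, ?_, ?_⟩, fun i j => ⟨?_, ?_, ?_⟩⟩ <;>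
  · refine Commute.symm ?_
    rw [← w_commute]
    simp [w_lie_mul, w_cm_add, w_cm_neg, w_cm_smul, f_H_x, f_H_y, f_H_d, f_H_e, f_P_x, f_P_y, f_P_d, f_P_e, f_M_x, f_M_y, f_M_d, f_M_e]
    try rw [gx i j]
    try rw [gy i j]
    try rw [gd i j]
    try rw [ge i j]
    try rw [gxe i j]
    try rw [gdy i j]
    try abel

end Rel

theorem stmt_5 (p q : ℕ) (hp : 1 ≤ p) (hq : 1 ≤ q) :
    (∀ i j : Fin p,
      Commute (-(xop p q j * dx p q i) + xop p q i * dx p q j) (Hop p q) ∧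
      Commute (-(xop p q j * dx p q i) + xop p q i * dx p q j) (Xplus p q) ∧
      Commute (-(xop p q j * dx p q i) + xop p q i * dx p q j) (Xminus p q)) ∧
    (∀ i j : Fin q,
      Commute (-(yop p q j * dy p q i) + yop p q i * dy p q j) (Hop p q) ∧
      Commute (-(yop p q j * dy p q i) + yop p q i * dy p q j) (Xplus p q) ∧
      Commute (-(yop p q j * dy p q i) + yop p q i * dy p q j) (Xminus p q)) ∧
    (∀ (i : Fin p) (j : Fin q),
      Commute (Complex.I • (xop p q i * yop p q j + dx p q i * dy p q j)) (Hop p q) ∧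
      Commute (Complex.I • (xop p q i * yop p q j + dx p q i * dy p q j)) (Xplus p q) ∧
      Commute (Complex.I • (xop p q i * yop p q j + dx p q i * dy p q j)) (Xminus p q)) := by
  exact abs_main p q (xop p q) (dx p q) (yop p q) (dy p q)
    (g_xx p q) (g_xy p q) (g_xd p q) (g_xe p q) (g_yx p q) (g_yy p q) (g_yd p q) (g_ye p q) (g_dx p q) (g_dy p q) (g_dd p q) (g_de p q) (g_ex p q) (g_ey p q) (g_ed p q) (g_ee p q)
    (Hop p q) (Xplus p q) (Xminus p q) rfl (by rw [Xplus, ry2_eq]; rfl) (by rw [Xminus, rx2_eq]; rfl)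
end

section
/- Let h₁ be a harmonic polynomial on ℝ^p homogeneous of degree k, h₂ a harmonic polynomial on ℝ^q homogeneous of degree l, set κ₊ = k + p/2, κ₋ = l + q/2, assume κ₊ ≠ 1, κ₋ ≠ 1, let a, b ∈ ℕ and α ∈ ℂ with α ∉ {1, 0, −1, −2, …}, and define (x_i h₁)† := x_i h₁ − (ρ_x/(κ₊−1))·∂_{x_i}h₁ and (y_j h₂)† := y_j h₂ − (ρ_y/(κ₋−1))·∂_{y_j}h₂. Then for all 1 ≤ i ≤ p and 1 ≤ j ≤ q, at every point with x ≠ 0 and y ≠ 0: (∂_{x_i}∂_{y_j} + x_i y_j)( h₁ h₂ ρ_x^a ρ_y^b ψ_α ) = (∂_{x_i}h₁)(∂_{y_j}h₂)·ρ_x^a ρ_y^b·( ((κ₊+a−α)(κ₋+b−α)/((κ₊−1)(κ₋−1)))·ψ_α + ((α−1)(κ₊+κ₋+a+b−α−1)/((κ₊−1)(κ₋−1)))·ψ_{α−1} ) + (∂_{x_i}h₁)·(y_j h₂)†·( −((κ₊+a+b−α)/(α(κ₊−1)))·ρ_x^{a+1}ρ_y^b·ψ_{α+1} + (b(κ₊+a−1)/(κ₊−1))·ρ_x^a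 ρ_y^{b−1}·ψ_α ) + (x_i h₁)†·(∂_{y_j}h₂)·( −((κ₋+a+b−α)/(α(κ₋−1)))·ρ_x^a ρ_y^{b+1}·ψ_{α+1} + (a(κ₋+b−1)/(κ₋−1))·ρ_x^{a−1}ρ_y^b·ψ_α ) + (x_i h₁)†·(y_j h₂)†·( −((a+b+1−α)/α)·ρ_x^a ρ_y^b·ψ_{α+1} + ab·ρ_x^{a−1}ρ_y^{b−1}·ψ_α ). -/
noncomputable section

/-- Points `(x, y) ∈ ℝ^p × ℝ^q`. -/
abbrev Pt (p q : ℕ) := (Fin p → ℝ) × (Fin q → ℝ)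

/-- The partial derivative `∂_{x_i}` of a function on `ℝ^p × ℝ^q`. -/
def pdx (p q : ℕ) (i : Fin p) (f : Pt p q → ℂ) : Pt p q → ℂ :=
  fun z => fderiv ℝ f z ((Pi.single i 1 : Fin p → ℝ), (0 : Fin q → ℝ))

/-- The partial derivative `∂_{y_j}` of a function on `ℝ^p × ℝ^q`. -/
def pdy (p q : ℕ) (j : Fin q) (f : Pt p q → ℂ) : Pt p q → ℂ :=
  fun z => fderiv ℝ f z ((0 : Fin p → ℝ), (Pi.single j 1 : Fin q → ℝ))

/-- `ρ_x = r_x²/2 = (Σ_i x_i²)/2`. -/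
def rhox (p q : ℕ) (z : Pt p q) : ℝ := (∑ i, z.1 i ^ 2) / 2

/-- `ρ_y = r_y²/2 = (Σ_j y_j²)/2`. -/
def rhoy (p q : ℕ) (z : Pt p q) : ℝ := (∑ j, z.2 j ^ 2) / 2

/-- The operator `H = −E_x − p/2 + E_y + q/2`. -/
def HOp (p q : ℕ) (f : Pt p q → ℂ) : Pt p q → ℂ := fun z =>
  -(∑ i, ((z.1 i : ℝ) : ℂ) * pdx p q i f z) - ((p : ℂ) / 2) * f z
    + (∑ j, ((z.2 j : ℝ) : ℂ) * pdy p q j f z) + ((q : ℂ) / 2) * f z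

/-- The operator `X⁺ = −(1/2)(Δ_x + r_y²)`. -/
def XpOp (p q : ℕ) (f : Pt p q → ℂ) : Pt p q → ℂ := fun z =>
  -(1 / 2 : ℂ) * ((∑ i, pdx p q i (pdx p q i f) z) + (((∑ j, z.2 j ^ 2 : ℝ)) : ℂ) * f z)

/-- The operator `X⁻ = (1/2)(r_x² + Δ_y)`. -/
def XmOp (p q : ℕ) (f : Pt p q → ℂ) : Pt p q → ℂ := fun z =>
  (1 / 2 : ℂ) * ((((∑ i, z.1 i ^ 2 : ℝ)) : ℂ) * f z + ∑ j, pdy p q j (pdy p q j f) z)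

/-- Rising factorial `(α)ₙ = α(α+1)⋯(α+n−1)` for a complex number `α`. -/
def rising (α : ℂ) : ℕ → ℂ
  | 0 => 1
  | n + 1 => rising α n * (α + n)

/-- Falling factorial `⟨β⟩ₙ = β(β−1)⋯(β−n+1)` for a complex number `β`. -/
def falling (β : ℂ) : ℕ → ℂ
  | 0 => 1
  | n + 1 => falling β n * (β - n)

/-- `Ψ_α(u) = Σ_{n=0}^∞ ((−1)ⁿ/(n!·(α)ₙ))·uⁿ`. -/
def Psi (α : ℂ) (u : ℂ) : ℂ :=
  ∑' n : ℕ, ((-1) ^ n / ((n.factorial : ℂ) * rising α n)) * u ^ n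

/-- `ψ_α(x,y) = Ψ_α(ρ_x ρ_y)`. -/
def psiF (p q : ℕ) (α : ℂ) (z : Pt p q) : ℂ :=
  Psi α (((rhox p q z * rhoy p q z : ℝ)) : ℂ)

end

lemma rising_succ' (α : ℂ) (n : ℕ) : rising α (n+1) = α * rising (α+1) n := by
  induction n with
  | zero => simp [rising]
  | succ n ih =>
    rw [rising, ih, rising]; push_cast; ring

lemma rising_ne (α : ℂ) (hα : ∀ n : ℕ, α ≠ -(n : ℂ)) (n : ℕ) : rising α n ≠ 0 := by
  induction n with
  | zero => simp [rising]
  | succ n ih =>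
    rw [rising]
    exact mul_ne_zero ih (fun h => hα n (eq_neg_of_add_eq_zero_left h))

lemma shift_ok (α : ℂ) (hα : ∀ n : ℕ, α ≠ -(n : ℂ)) : ∀ n : ℕ, α + 1 ≠ -(n : ℂ) := by
  intro n h
  apply hα (n+1)
  push_cast
  linear_combination h

noncomputable def pc (α : ℂ) (n : ℕ) : ℂ := ((-1) ^ n / ((n.factorial : ℂ) * rising α n))

lemma Psi_eq (α u : ℂ) : Psi α u = ∑' n : ℕ, pc α n * u ^ n := rfl

lemma pc_succ (α : ℂ) (hα : ∀ n : ℕ, α ≠ -(n : ℂ)) (n : ℕ) :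
    pc α (n+1) = - pc α n / ((n+1) * (α + n)) := by
  have h1 := rising_ne α hα n
  have h2 : α + n ≠ 0 := fun h => hα n (eq_neg_of_add_eq_zero_left h)
  have h3 : (n.factorial : ℂ) ≠ 0 := by exact_mod_cast n.factorial_ne_zero
  have h4 : ((n:ℂ)+1) ≠ 0 := by exact_mod_cast n.succ_ne_zero
  unfold pc
  rw [rising, Nat.factorial_succ]
  push_cast
  field_simp
  ring

lemma pc_succ' (α : ℂ) (hα : ∀ n : ℕ, α ≠ -(n : ℂ)) (n : ℕ) :
    pc α (n+1) = - pc (α+1) n / ((n+1) * α) := by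
  have h1 := rising_ne (α+1) (shift_ok α hα) n
  have h2 : α ≠ 0 := by simpa using hα 0
  have h3 : (n.factorial : ℂ) ≠ 0 := by exact_mod_cast n.factorial_ne_zero
  have h4 : ((n:ℂ)+1) ≠ 0 := by exact_mod_cast n.succ_ne_zero
  unfold pc
  rw [rising_succ', Nat.factorial_succ]
  push_cast
  field_simp
  ring

lemma pc_shift (α : ℂ) (hα : ∀ n : ℕ, α ≠ -(n : ℂ)) (n : ℕ) :
    pc α n = pc (α+1) n * ((α+n)/α) := by
  have h1 := rising_ne (α+1) (shift_ok α hα) n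
  have h1' := rising_ne α hα n
  have h2 : α ≠ 0 := by simpa using hα 0
  have h3 : (n.factorial : ℂ) ≠ 0 := by exact_mod_cast n.factorial_ne_zero
  have h5 := rising_succ' α n
  rw [rising] at h5
  unfold pc
  field_simp
  linear_combination -h5

lemma pc_summable (α : ℂ) (hα : ∀ n : ℕ, α ≠ -(n : ℂ)) (u : ℂ) :
    Summable (fun n => pc α n * u ^ n) := by
  apply summable_of_ratio_norm_eventually_le (r := 1/2) (by norm_num)
  obtain ⟨N, hN⟩ := exists_nat_ge (‖α‖ + 1 + 2 * ‖u‖)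
  filter_upwards [Filter.eventually_ge_atTop N] with n hn
  have hn' : (N:ℝ) ≤ n := by exact_mod_cast hn
  have hu := norm_nonneg u
  have ha := norm_nonneg α
  rw [pc_succ α hα]
  have e : -pc α n / ((n + 1) * (α + n)) * u ^ (n+1) = (pc α n * u^n) * (-u / ((n+1) * (α + n))) := by
    ring
  rw [e, norm_mul, mul_comm]
  apply mul_le_mul_of_nonneg_right _ (norm_nonneg _)
  have h1 : 1 ≤ ‖α + n‖ := by
    have := norm_sub_norm_le (n:ℂ) (-α)
    rw [norm_neg, Complex.norm_natCast, sub_neg_eq_add, add_comm] at this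
    linarith
  have h2 : ‖(n:ℂ)+1‖ = n + 1 := by
    have := Complex.norm_natCast (n+1)
    push_cast at this
    exact this
  rw [norm_div, norm_mul, norm_neg, h2, div_le_iff₀ (by positivity)]
  nlinarith

lemma Psi_contig (α : ℂ) (hα : ∀ n : ℕ, α ≠ -(n : ℂ)) (u : ℂ) :
    Psi α u = Psi (α+1) u - u / (α * (α+1)) * Psi (α+1+1) u := by
  have ha1 := shift_ok α hα
  have ha2 := shift_ok _ ha1
  have s0 := pc_summable α hα u
  have s1 := pc_summable _ ha1 u
  have s2 := pc_summable _ ha2 u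
  have h2 : α ≠ 0 := by simpa using hα 0
  have h3 : α + 1 ≠ 0 := by simpa using ha1 0
  rw [Psi_eq, Psi_eq, Psi_eq, s0.tsum_eq_zero_add, s1.tsum_eq_zero_add, ← tsum_mul_left, add_sub_assoc,
    ← ((summable_nat_add_iff 1).2 s1).tsum_sub (s2.mul_left _)]
  congr 1
  · congr 1
    ext n
    have h4 : ((n:ℂ)+1) ≠ 0 := by exact_mod_cast n.succ_ne_zero
    rw [pc_succ' α hα, pc_succ' _ ha1, pc_shift _ ha1]
    field_simp
    ring

lemma Psi_deriv (α : ℂ) (hα : ∀ n : ℕ, α ≠ -(n : ℂ)) (u : ℂ) :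
    HasDerivAt (Psi α) (-(1/α) * Psi (α+1) u) u := by
  have ha1 := shift_ok α hα
  have h2 : α ≠ 0 := by simpa using hα 0
  set R : ℝ := ‖u‖ + 1 with hR
  have key : ∀ (n : ℕ) (y : ℂ), pc α (n+1) * (((n+1 : ℕ):ℂ) * y ^ n) = -(1/α) * (pc (α+1) n * y ^ n) := by
    intro n y
    have h4 : ((n:ℂ)+1) ≠ 0 := by exact_mod_cast n.succ_ne_zero
    rw [pc_succ' α hα]
    push_cast
    field_simp
  have hsum : Summable (fun n : ℕ => ‖pc α n * ((n:ℂ) * (R:ℂ) ^ (n-1))‖) := by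
    rw [← summable_nat_add_iff 1]
    simp only [Nat.add_sub_cancel, key]
    exact ((pc_summable _ ha1 (R:ℂ)).mul_left _).norm
  have hu : u ∈ Metric.ball (0:ℂ) R := by simp [hR]
  have := hasDerivAt_tsum_of_isPreconnected (g := fun n y => pc α n * y ^ n)
    (g' := fun n y => pc α n * ((n:ℂ) * y ^ (n-1))) hsum Metric.isOpen_ball
    (convex_ball (0:ℂ) R).isPreconnected
    (fun n y _ => (hasDerivAt_pow n y).const_mul _)
    (by
      intro n y hy
      have : ‖y‖ ≤ ‖(R:ℂ)‖ := by
        rw [Complex.norm_real]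
        exact (mem_ball_zero_iff.1 hy).le.trans (le_abs_self _)
      rw [norm_mul, norm_mul, norm_pow, norm_mul, norm_mul, norm_pow]
      gcongr) hu (pc_summable α hα u) hu
  refine HasDerivAt.congr_deriv this ?_
  have s : Summable (fun n : ℕ => pc α n * ((n:ℂ) * u ^ (n-1))) := by
    rw [← summable_nat_add_iff 1]
    simp only [Nat.add_sub_cancel, key]
    exact ((pc_summable _ ha1 u).mul_left _)
  rw [s.tsum_eq_zero_add]
  simp only [Nat.add_sub_cancel, key]
  rw [tsum_mul_left, Psi_eq]
  simp

/-- directional derivative predicate -/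
def DD {V : Type*} [NormedAddCommGroup V] [NormedSpace ℝ V] (f : V → ℂ) (z v : V) (d : ℂ) : Prop :=
  DifferentiableAt ℝ f z ∧ fderiv ℝ f z v = d

section
variable {V : Type*} [NormedAddCommGroup V] [NormedSpace ℝ V] {f g : V → ℂ} {z v : V} {d e : ℂ}

lemma DD.mul (hf : DD f z v d) (hg : DD g z v e) :
    DD (fun w => f w * g w) z v (d * g z + f z * e) := by
  refine ⟨hf.1.mul hg.1, ?_⟩
  rw [fderiv_fun_mul hf.1 hg.1]
  simp [hf.2, hg.2]; ring

lemma DD.add (hf : DD f z v d) (hg : DD g z v e) :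
    DD (fun w => f w + g w) z v (d + e) := by
  refine ⟨hf.1.add hg.1, ?_⟩
  rw [fderiv_fun_add hf.1 hg.1]
  simp [hf.2, hg.2]

lemma DD.comp (hf : DD f z v d) {F : ℂ → ℂ} {F' : ℂ} (hF : HasDerivAt F F' (f z)) :
    DD (fun w => F (f w)) z v (F' * d) := by
  have h := (hF.hasFDerivAt.restrictScalars ℝ).comp z hf.1.hasFDerivAt
  refine ⟨h.differentiableAt, ?_⟩
  have h' : fderiv ℝ (fun w => F (f w)) z = _ := h.fderiv
  rw [h']
  simp [hf.2, mul_comm]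

lemma DD.const (c : ℂ) : DD (fun _ : V => c) z v 0 := by
  refine ⟨by fun_prop, by simp⟩

lemma DD.pow (hf : DD f z v d) (n : ℕ) :
    DD (fun w => f w ^ n) z v ((n : ℂ) * f z ^ (n-1) * d) :=
  hf.comp (F := fun x => x ^ n) (hasDerivAt_pow n _)

lemma DD.of_eq (hf : DD f z v d) (h : d = e) : DD f z v e := h ▸ hf

end

lemma DD_lin {V : Type*} [NormedAddCommGroup V] [NormedSpace ℝ V] (L : V →L[ℝ] ℝ) (z v : V) :
    DD (fun w => ((L w : ℝ) : ℂ)) z v ((L v : ℝ) : ℂ) := by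
  have h := (Complex.ofRealCLM.comp L).hasFDerivAt (x := z)
  refine ⟨h.differentiableAt, ?_⟩
  have h' : fderiv ℝ (fun w => ((L w : ℝ) : ℂ)) z = _ := h.fderiv
  rw [h']
  simp

lemma DD_poly {V : Type*} [NormedAddCommGroup V] [NormedSpace ℝ V] {n : ℕ}
    (L : Fin n → V →L[ℝ] ℝ) (z v : V) (h : MvPolynomial (Fin n) ℝ) :
    DD (fun w => ((MvPolynomial.eval (fun i => L i w) h : ℝ) : ℂ)) z v
      (∑ i, ((L i v : ℝ) : ℂ) *
        ((MvPolynomial.eval (fun i => L i z) (MvPolynomial.pderiv i h) : ℝ) : ℂ)) := by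
  induction h using MvPolynomial.induction_on with
  | C a => simpa using DD.const (a : ℂ)
  | add f g hf hg =>
    simp only [map_add, Complex.ofReal_add, mul_add, Finset.sum_add_distrib]
    exact hf.add hg
  | mul_X f m hf =>
    have := hf.mul (DD_lin (L m) z v)
    simp only [map_mul, MvPolynomial.eval_X, Complex.ofReal_mul]
    refine this.of_eq ?_
    simp only [Derivation.leibniz, smul_eq_mul, map_add, map_mul, MvPolynomial.eval_X, MvPolynomial.pderiv_X,
      Complex.ofReal_add, Complex.ofReal_mul, mul_add, Finset.sum_add_distrib, Finset.sum_mul]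
    rw [add_comm]
    congr 1
    · rw [Finset.sum_eq_single m]
      · simp; ring
      · intro b _ hb
        simp [Pi.single_apply, hb, hb.symm]
      · simp
    · apply Finset.sum_congr rfl
      intros; ring

noncomputable def Lx (p q : ℕ) (i : Fin p) : Pt p q →L[ℝ] ℝ :=
  (ContinuousLinearMap.proj i).comp (ContinuousLinearMap.fst ℝ (Fin p → ℝ) (Fin q → ℝ))

noncomputable def Ly (p q : ℕ) (i : Fin q) : Pt p q →L[ℝ] ℝ :=
  (ContinuousLinearMap.proj i).comp (ContinuousLinearMap.snd ℝ (Fin p → ℝ) (Fin q → ℝ))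

abbrev vx (p q : ℕ) (i : Fin p) : Pt p q := ((Pi.single i 1 : Fin p → ℝ), (0 : Fin q → ℝ))
abbrev vy (p q : ℕ) (i : Fin q) : Pt p q := ((0 : Fin p → ℝ), (Pi.single i 1 : Fin q → ℝ))

section
variable {p q : ℕ}

lemma E1x (h : MvPolynomial (Fin p) ℝ) (z : Pt p q) (i : Fin p) :
    DD (fun z : Pt p q => ((MvPolynomial.eval z.1 h : ℝ) : ℂ)) z (vx p q i)
      ((MvPolynomial.eval z.1 (MvPolynomial.pderiv i h) : ℝ) : ℂ) := by
  refine (DD_poly (Lx p q) z (vx p q i) h).of_eq ?_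
  rw [Finset.sum_eq_single i]
  · simp [Lx]
  · intro b _ hb
    simp [Lx, Pi.single_apply, hb]
  · simp

lemma E1y (h : MvPolynomial (Fin p) ℝ) (z : Pt p q) (j : Fin q) :
    DD (fun z : Pt p q => ((MvPolynomial.eval z.1 h : ℝ) : ℂ)) z (vy p q j) 0 := by
  refine (DD_poly (Lx p q) z (vy p q j) h).of_eq ?_
  simp [Lx]

lemma E2y (h : MvPolynomial (Fin q) ℝ) (z : Pt p q) (i : Fin q) :
    DD (fun z : Pt p q => ((MvPolynomial.eval z.2 h : ℝ) : ℂ)) z (vy p q i)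
      ((MvPolynomial.eval z.2 (MvPolynomial.pderiv i h) : ℝ) : ℂ) := by
  refine (DD_poly (Ly p q) z (vy p q i) h).of_eq ?_
  rw [Finset.sum_eq_single i]
  · simp [Ly]
  · intro b _ hb
    simp [Ly, Pi.single_apply, hb]
  · simp

lemma E2x (h : MvPolynomial (Fin q) ℝ) (z : Pt p q) (j : Fin p) :
    DD (fun z : Pt p q => ((MvPolynomial.eval z.2 h : ℝ) : ℂ)) z (vx p q j) 0 := by
  refine (DD_poly (Ly p q) z (vx p q j) h).of_eq ?_
  simp [Ly]

noncomputable def rp (n : ℕ) : MvPolynomial (Fin n) ℝ := MvPolynomial.C (1/2) * ∑ i, MvPolynomial.X i ^ 2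

lemma rhox_eq (z : Pt p q) : rhox p q z = MvPolynomial.eval z.1 (rp p) := by
  simp [rhox, rp]; ring

lemma rhoy_eq (z : Pt p q) : rhoy p q z = MvPolynomial.eval z.2 (rp q) := by
  simp [rhoy, rp]; ring

lemma rp_pderiv (n : ℕ) (i : Fin n) : MvPolynomial.pderiv i (rp n) = MvPolynomial.X i := by
  simp only [rp, Derivation.leibniz, map_sum, MvPolynomial.pderiv_C, smul_zero, add_zero,
    Derivation.leibniz_pow, MvPolynomial.pderiv_X, smul_eq_mul]
  rw [Finset.sum_eq_single i]
  · simp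
    rw [← mul_assoc, show (2 : MvPolynomial (Fin n) ℝ) = MvPolynomial.C 2 from rfl,
      ← MvPolynomial.C_mul]
    norm_num
  · intro b _ hb
    simp [Pi.single_apply, hb, hb.symm]
  · simp

lemma Rxx (z : Pt p q) (i : Fin p) :
    DD (fun z : Pt p q => ((rhox p q z : ℝ) : ℂ)) z (vx p q i) ((z.1 i : ℝ) : ℂ) := by
  simp only [rhox_eq]
  exact (E1x _ z i).of_eq (by rw [rp_pderiv]; simp)

lemma Rxy (z : Pt p q) (i : Fin q) :
    DD (fun z : Pt p q => ((rhox p q z : ℝ) : ℂ)) z (vy p q i) 0 := by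
  simp only [rhox_eq]
  exact E1y _ z i

lemma Ryy (z : Pt p q) (i : Fin q) :
    DD (fun z : Pt p q => ((rhoy p q z : ℝ) : ℂ)) z (vy p q i) ((z.2 i : ℝ) : ℂ) := by
  simp only [rhoy_eq]
  exact (E2y _ z i).of_eq (by rw [rp_pderiv]; simp)

lemma Ryx (z : Pt p q) (i : Fin p) :
    DD (fun z : Pt p q => ((rhoy p q z : ℝ) : ℂ)) z (vx p q i) 0 := by
  simp only [rhoy_eq]
  exact E2x _ z i

lemma psix (α : ℂ) (hα : ∀ n : ℕ, α ≠ -(n : ℂ)) (z : Pt p q) (i : Fin p) :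
    DD (psiF p q α) z (vx p q i)
      (-(1/α) * psiF p q (α+1) z * (((z.1 i : ℝ) : ℂ) * ((rhoy p q z : ℝ) : ℂ))) := by
  have h := ((Rxx z i).mul (Ryx z i)).comp (Psi_deriv α hα _)
  have e : psiF p q α = fun w => Psi α (((rhox p q w : ℝ) : ℂ) * ((rhoy p q w : ℝ) : ℂ)) := by
    ext w; simp [psiF]
  rw [e]
  refine h.of_eq ?_
  simp [psiF]

lemma psiy (α : ℂ) (hα : ∀ n : ℕ, α ≠ -(n : ℂ)) (z : Pt p q) (i : Fin q) :
    DD (psiF p q α) z (vy p q i)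
      (-(1/α) * psiF p q (α+1) z * (((z.2 i : ℝ) : ℂ) * ((rhox p q z : ℝ) : ℂ))) := by
  have h := ((Rxy z i).mul (Ryy z i)).comp (Psi_deriv α hα _)
  have e : psiF p q α = fun w => Psi α (((rhox p q w : ℝ) : ℂ) * ((rhoy p q w : ℝ) : ℂ)) := by
    ext w; simp [psiF]
  rw [e]
  refine h.of_eq ?_
  simp only [psiF, Complex.ofReal_mul]; ring

lemma Cyx (z : Pt p q) (i : Fin p) (j : Fin q) :
    DD (fun z : Pt p q => ((z.2 j : ℝ) : ℂ)) z (vx p q i) 0 :=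
  (DD_lin (Ly p q j) z (vx p q i)).of_eq (by simp [Ly])

end

theorem stmt_15 (p q k l : ℕ) (hp : 1 ≤ p) (hq : 1 ≤ q)
    (h₁ : MvPolynomial (Fin p) ℝ) (h₂ : MvPolynomial (Fin q) ℝ)
    (hhom₁ : h₁.IsHomogeneous k) (hhom₂ : h₂.IsHomogeneous l)
    (hharm₁ : ∑ i : Fin p, MvPolynomial.pderiv i (MvPolynomial.pderiv i h₁) = 0)
    (hharm₂ : ∑ j : Fin q, MvPolynomial.pderiv j (MvPolynomial.pderiv j h₂) = 0)
    (κp κm : ℂ) (hκp : κp = (k : ℂ) + (p : ℂ) / 2) (hκm : κm = (l : ℂ) + (q : ℂ) / 2)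
    (hκp1 : κp ≠ 1) (hκm1 : κm ≠ 1)
    (a b : ℕ) (α : ℂ) (hα : ∀ n : ℕ, α ≠ -(n : ℂ)) (hα1 : α ≠ 1)
    (E₁ E₂ : Pt p q → ℂ)
    (hE₁ : E₁ = fun z => ((MvPolynomial.eval z.1 h₁ : ℝ) : ℂ))
    (hE₂ : E₂ = fun z => ((MvPolynomial.eval z.2 h₂ : ℝ) : ℂ))
    (D₁ : Fin p → Pt p q → ℂ) (D₂ : Fin q → Pt p q → ℂ)
    (hD₁ : D₁ = fun i z => ((MvPolynomial.eval z.1 (MvPolynomial.pderiv i h₁) : ℝ) : ℂ))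
    (hD₂ : D₂ = fun j z => ((MvPolynomial.eval z.2 (MvPolynomial.pderiv j h₂) : ℝ) : ℂ))
    (Dag₁ : Fin p → Pt p q → ℂ) (Dag₂ : Fin q → Pt p q → ℂ)
    (hDag₁ : Dag₁ = fun i z =>
      ((z.1 i : ℝ) : ℂ) * E₁ z - (((rhox p q z : ℝ) : ℂ) / (κp - 1)) * D₁ i z)
    (hDag₂ : Dag₂ = fun j z =>
      ((z.2 j : ℝ) : ℂ) * E₂ z - (((rhoy p q z : ℝ) : ℂ) / (κm - 1)) * D₂ j z)
    (f : Pt p q → ℂ)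
    (hf : f = fun z => E₁ z * E₂ z * ((rhox p q z : ℝ) : ℂ) ^ (a : ℤ) *
      ((rhoy p q z : ℝ) : ℂ) ^ (b : ℤ) * psiF p q α z) :
    ∀ (i : Fin p) (j : Fin q) (z : Pt p q), z.1 ≠ 0 → z.2 ≠ 0 →
      pdx p q i (pdy p q j f) z + ((z.1 i : ℝ) : ℂ) * ((z.2 j : ℝ) : ℂ) * f z =
        D₁ i z * D₂ j z * ((rhox p q z : ℝ) : ℂ) ^ (a : ℤ) * ((rhoy p q z : ℝ) : ℂ) ^ (b : ℤ) *
          (((κp + (a : ℂ) - α) * (κm + (b : ℂ) - α) / ((κp - 1) * (κm - 1))) * psiF p q α z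
            + ((α - 1) * (κp + κm + (a : ℂ) + (b : ℂ) - α - 1) / ((κp - 1) * (κm - 1))) *
              psiF p q (α - 1) z)
        + D₁ i z * Dag₂ j z *
          (-((κp + (a : ℂ) + (b : ℂ) - α) / (α * (κp - 1))) *
              ((rhox p q z : ℝ) : ℂ) ^ ((a : ℤ) + 1) * ((rhoy p q z : ℝ) : ℂ) ^ (b : ℤ) *
              psiF p q (α + 1) z
            + ((b : ℂ) * (κp + (a : ℂ) - 1) / (κp - 1)) *
              ((rhox p q z : ℝ) : ℂ) ^ (a : ℤ) * ((rhoy p q z : ℝ) : ℂ) ^ ((b : ℤ) - 1) *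
              psiF p q α z)
        + Dag₁ i z * D₂ j z *
          (-((κm + (a : ℂ) + (b : ℂ) - α) / (α * (κm - 1))) *
              ((rhox p q z : ℝ) : ℂ) ^ (a : ℤ) * ((rhoy p q z : ℝ) : ℂ) ^ ((b : ℤ) + 1) *
              psiF p q (α + 1) z
            + ((a : ℂ) * (κm + (b : ℂ) - 1) / (κm - 1)) *
              ((rhox p q z : ℝ) : ℂ) ^ ((a : ℤ) - 1) * ((rhoy p q z : ℝ) : ℂ) ^ (b : ℤ) *
              psiF p q α z)
        + Dag₁ i z * Dag₂ j z *
          (-(((a : ℂ) + (b : ℂ) + 1 - α) / α) *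
              ((rhox p q z : ℝ) : ℂ) ^ (a : ℤ) * ((rhoy p q z : ℝ) : ℂ) ^ (b : ℤ) *
              psiF p q (α + 1) z
            + (a : ℂ) * (b : ℂ) *
              ((rhox p q z : ℝ) : ℂ) ^ ((a : ℤ) - 1) * ((rhoy p q z : ℝ) : ℂ) ^ ((b : ℤ) - 1) *
              psiF p q α z) := by
  intro i j z hx hy
  have ha0 : α ≠ 0 := by simpa using hα 0
  have hα' := shift_ok α hα
  have ha1 : α + 1 ≠ 0 := by simpa using hα' 0
  have hαm : ∀ n : ℕ, α - 1 ≠ -(n : ℂ) := by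
    intro n h
    cases n with
    | zero => exact hα1 (by push_cast at h; linear_combination h)
    | succ n => exact hα n (by push_cast at h; linear_combination h)
  have ham : α - 1 ≠ 0 := by simpa using hαm 0
  have hX : ((rhox p q z : ℝ) : ℂ) ≠ 0 := by
    rw [Complex.ofReal_ne_zero]
    obtain ⟨m, hm⟩ := Function.ne_iff.1 hx
    have : 0 < ∑ i, z.1 i ^ 2 :=
      Finset.sum_pos' (fun _ _ => sq_nonneg _) ⟨m, Finset.mem_univ _, by have : z.1 m ≠ 0 := hm; positivity⟩
    unfold rhox; positivity
  have hY : ((rhoy p q z : ℝ) : ℂ) ≠ 0 := by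
    rw [Complex.ofReal_ne_zero]
    obtain ⟨m, hm⟩ := Function.ne_iff.1 hy
    have : 0 < ∑ i, z.2 i ^ 2 :=
      Finset.sum_pos' (fun _ _ => sq_nonneg _) ⟨m, Finset.mem_univ _, by have : z.2 m ≠ 0 := hm; positivity⟩
    unfold rhoy; positivity
  have hE1x : ∀ w, DD E₁ w (vx p q i) (D₁ i w) := by
    intro w; rw [hE₁, hD₁]; exact E1x h₁ w i
  have hE1y : ∀ w, DD E₁ w (vy p q j) 0 := by
    intro w; rw [hE₁]; exact E1y h₁ w j
  have hE2y : ∀ w, DD E₂ w (vy p q j) (D₂ j w) := by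
    intro w; rw [hE₂, hD₂]; exact E2y h₂ w j
  have hE2x : ∀ w, DD E₂ w (vx p q i) 0 := by
    intro w; rw [hE₂]; exact E2x h₂ w i
  have hD2x : ∀ w, DD (D₂ j) w (vx p q i) 0 := by
    intro w; rw [hD₂]; exact E2x (MvPolynomial.pderiv j h₂) w i
  have hG : pdy p q j f = fun w => E₁ w * ((rhox p q w : ℝ) : ℂ) ^ a *
      (D₂ j w * ((rhoy p q w : ℝ) : ℂ) ^ b * psiF p q α w
       + E₂ w * ((w.2 j : ℝ) : ℂ) * ((b : ℂ) * ((rhoy p q w : ℝ) : ℂ) ^ (b-1) * psiF p q α w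
         + (-(1/α)) * ((rhoy p q w : ℝ) : ℂ) ^ b * ((rhox p q w : ℝ) : ℂ) * psiF p q (α+1) w)) := by
    ext w
    have h := (((hE1y w).mul (hE2y w)).mul ((Rxy w j).pow a)).mul ((Ryy w j).pow b) |>.mul
      (psiy α hα w j)
    have h2 := h.2
    simp only [zpow_natCast] at hf
    rw [hf]
    refine h2.trans ?_
    ring
  have hfin := (((hE1x z).mul ((Rxx z i).pow a)).mul
      ((((hD2x z).mul ((Ryx z i).pow b)).mul (psix α hα z i)).add
        (((hE2x z).mul (Cyx z i j)).mul
          ((((DD.const (b:ℂ)).mul ((Ryx z i).pow (b-1))).mul (psix α hα z i)).add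
            ((((DD.const (-(1/α))).mul ((Ryx z i).pow b)).mul (Rxx z i)).mul
              (psix (α+1) hα' z i)))))).2
  have eA : (a : ℂ) * ((rhox p q z : ℝ) : ℂ) ^ (a-1)
      = a * (((rhox p q z : ℝ) : ℂ) ^ a / ((rhox p q z : ℝ) : ℂ)) := by
    cases a with
    | zero => simp
    | succ n => rw [Nat.add_sub_cancel, pow_succ, mul_div_cancel_right₀ _ hX]
  have eB : (b : ℂ) * ((rhoy p q z : ℝ) : ℂ) ^ (b-1)
      = b * (((rhoy p q z : ℝ) : ℂ) ^ b / ((rhoy p q z : ℝ) : ℂ)) := by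
    cases b with
    | zero => simp
    | succ n => rw [Nat.add_sub_cancel, pow_succ, mul_div_cancel_right₀ _ hY]
  have c0 : psiF p q α z = psiF p q (α+1) z
      - ((rhox p q z : ℝ) : ℂ) * ((rhoy p q z : ℝ) : ℂ) / (α * (α+1)) * psiF p q (α+1+1) z := by
    have := Psi_contig α hα (((rhox p q z * rhoy p q z : ℝ)) : ℂ)
    unfold psiF
    rw [this]; push_cast; ring
  have cm : psiF p q (α-1) z = psiF p q α z
      - ((rhox p q z : ℝ) : ℂ) * ((rhoy p q z : ℝ) : ℂ) / ((α-1) * α) * psiF p q (α+1) z := by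
    have := Psi_contig (α-1) hαm (((rhox p q z * rhoy p q z : ℝ)) : ℂ)
    unfold psiF
    rw [this]; push_cast; ring_nf
  have hκp' : κp - 1 ≠ 0 := sub_ne_zero.2 hκp1
  have hκm' : κm - 1 ≠ 0 := sub_ne_zero.2 hκm1
  have efz := congrFun hf z
  have e1 := congrFun (congrFun hDag₁ i) z
  have e2 := congrFun (congrFun hDag₂ j) z
  beta_reduce at efz e1 e2
  rw [hG]
  refine (congrArg (fun t => t + _) hfin).trans ?_
  rw [efz, e1, e2, cm, zpow_add_one₀ hX, zpow_add_one₀ hY, zpow_sub_one₀ hX, zpow_sub_one₀ hY]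
  simp only [zpow_natCast, mul_zero, zero_mul, add_zero, zero_add]
  rw [eA, eB, c0]
  clear hfin hG efz e1 e2 cm c0 eA eB hE1x hE1y hE2x hE2y hD2x hκp hκm hα hα' hαm
  generalize ((rhox p q z : ℝ) : ℂ) ^ a = U
  generalize ((rhoy p q z : ℝ) : ℂ) ^ b = W
  generalize ((rhox p q z : ℝ) : ℂ) = X at *
  generalize ((rhoy p q z : ℝ) : ℂ) = Y at *
  generalize psiF p q (α+1) z = P1
  generalize psiF p q (α+1+1) z = P2
  generalize D₁ i z = d1
  generalize D₂ j z = d2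
  generalize E₁ z = m1
  generalize E₂ z = m2
  obtain ⟨K, rfl⟩ : ∃ K, κp = K + 1 := ⟨κp - 1, by ring⟩
  obtain ⟨M, rfl⟩ : ∃ K, κm = K + 1 := ⟨κm - 1, by ring⟩
  simp only [add_sub_cancel_right] at *
  field_simp
  ring
end
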